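/- arXiv:2309.00721 — 4 statements merged into one kernel-verified Lean document; each statement's English description precedes it below -/
import Mathlib

section
/- Let M be a 3×3 real symmetric matrix and a, b, m₀ real numbers with 0 < a, a‖u‖² ≤ uᵀMu ≤ b‖u‖² for all u ∈ ℝ³, and a ≤ m₀ ≤ b. Then for every q ∈ ℝ⁴ with ‖q‖ = 1, the matrix D(q) = J(q)MJᵀ(q) + m₀qqᵀ is symmetric and satisfies a‖v‖² ≤ vᵀD(q)v ≤ b‖v‖² for all v ∈ ℝ⁴. -/
/-!
The columns of `[q J(q)]` are orthogonal of length `‖q‖`, so `J(q)J(q)ᵀ + qqᵀ = ‖q‖² I`; that is,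
`D(q)` built from the data `M = c I`, `m₀ = c` is `c‖q‖² I`. The quadratic form of `D(q)` is
`vᵀD(q)v = uᵀMu + m₀(q ⬝ v)²` with `u = J(q)ᵀv`, hence monotone in `(M, m₀)`. The hypotheses place
`(M, m₀)` between `(a I, a)` and `(b I, b)`, so `D(q)` lies between `a‖q‖² I` and `b‖q‖² I`.
-/

open Matrix

noncomputable section

/-- Cross-product (hat) matrix of a 3-vector: `vecHat v *ᵥ u = v ×₃ u`. -/
def vecHat (v : Fin 3 → ℝ) : Matrix (Fin 3) (Fin 3) ℝ :=
  !![0, -v 2, v 1; v 2, 0, -v 0; -v 1, v 0, 0]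

/-- The 4×3 matrix J(x): first row −x⃗ᵀ, lower 3×3 block x₀I₃ + x⃗^∧. -/
def Jmat (x : Fin 4 → ℝ) : Matrix (Fin 4) (Fin 3) ℝ :=
  Matrix.of fun i j =>
    if h : i = 0 then -x j.succ
    else (x 0 • (1 : Matrix (Fin 3) (Fin 3) ℝ) + vecHat fun k => x k.succ) (i.pred h) j

/-- The 4×3 matrix L(x): first row −x⃗ᵀ, lower 3×3 block x₀I₃ − x⃗^∧. -/
def Lmat (x : Fin 4 → ℝ) : Matrix (Fin 4) (Fin 3) ℝ :=
  Matrix.of fun i j =>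
    if h : i = 0 then -x j.succ
    else (x 0 • (1 : Matrix (Fin 3) (Fin 3) ℝ) - vecHat fun k => x k.succ) (i.pred h) j

/-- The 4×4 matrix Q(x) = [x J(x)] (first column x, remaining columns J(x)). -/
def Qmat (x : Fin 4 → ℝ) : Matrix (Fin 4) (Fin 4) ℝ :=
  Matrix.of fun i j => if h : j = 0 then x i else Jmat x i (j.pred h)

/-- The 4×4 matrix W(x) = [x L(x)] (first column x, remaining columns L(x)). -/
def Wmat (x : Fin 4 → ℝ) : Matrix (Fin 4) (Fin 4) ℝ :=
  Matrix.of fun i j => if h : j = 0 then x i else Lmat x i (j.pred h)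

/-- Euclidean norm on ℝ⁴: ‖x‖ = (xᵀx)^{1/2}. -/
def norm4 (x : Fin 4 → ℝ) : ℝ := Real.sqrt (x ⬝ᵥ x)

/-- The identity quaternion 1̄ = (1,0,0,0) ∈ ℝ⁴. -/
def one4 : Fin 4 → ℝ := ![1, 0, 0, 0]

/-- Inertia-type matrix D(q) = J(q) M Jᵀ(q) + m₀ q qᵀ. -/
def Dmat (M : Matrix (Fin 3) (Fin 3) ℝ) (m₀ : ℝ) (q : Fin 4 → ℝ) :
    Matrix (Fin 4) (Fin 4) ℝ :=
  Jmat q * M * (Jmat q)ᵀ + m₀ • vecMulVec q q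

section QuadraticForm

variable {m n R : Type*} [Fintype m] [Fintype n]

theorem dotProduct_mul_mul_transpose_mulVec [NonUnitalCommSemiring R]
    (A : Matrix m n R) (M : Matrix n n R) (v : m → R) :
    v ⬝ᵥ ((A * M * Aᵀ) *ᵥ v) = (Aᵀ *ᵥ v) ⬝ᵥ (M *ᵥ (Aᵀ *ᵥ v)) := by
  rw [← mulVec_mulVec, ← mulVec_mulVec, dotProduct_mulVec v A, ← mulVec_transpose]

theorem dotProduct_vecMulVec_self_mulVec [CommSemiring R] (q v : m → R) :
    v ⬝ᵥ (vecMulVec q q *ᵥ v) = (q ⬝ᵥ v) ^ 2 := by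
  rw [vecMulVec_mulVec, op_smul_eq_smul, dotProduct_smul, smul_eq_mul, dotProduct_comm v q, sq]

theorem dotProduct_smul_one_mulVec [CommSemiring R] [DecidableEq n] (c : R) (v : n → R) :
    v ⬝ᵥ ((c • (1 : Matrix n n R)) *ᵥ v) = c * (v ⬝ᵥ v) := by
  rw [smul_mulVec, one_mulVec, dotProduct_smul, smul_eq_mul]

end QuadraticForm

theorem isSymm_mul_mul_transpose {m n R : Type*} [Fintype n] [NonUnitalCommSemiring R]
    {M : Matrix n n R} (hM : M.IsSymm) (A : Matrix m n R) : (A * M * Aᵀ).IsSymm := by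
  rw [IsSymm, transpose_mul, transpose_mul, transpose_transpose, hM.eq, Matrix.mul_assoc]

theorem isSymm_Dmat {M : Matrix (Fin 3) (Fin 3) ℝ} (hM : M.IsSymm) (m₀ : ℝ) (q : Fin 4 → ℝ) :
    (Dmat M m₀ q).IsSymm :=
  (isSymm_mul_mul_transpose hM _).add (IsSymm.smul (transpose_vecMulVec q q) m₀)

theorem dotProduct_Dmat_mulVec (M : Matrix (Fin 3) (Fin 3) ℝ) (m₀ : ℝ) (q v : Fin 4 → ℝ) :
    v ⬝ᵥ (Dmat M m₀ q *ᵥ v) =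
      ((Jmat q)ᵀ *ᵥ v) ⬝ᵥ (M *ᵥ ((Jmat q)ᵀ *ᵥ v)) + m₀ * (q ⬝ᵥ v) ^ 2 := by
  rw [Dmat, add_mulVec, dotProduct_add, smul_mulVec, dotProduct_smul, smul_eq_mul,
    dotProduct_mul_mul_transpose_mulVec, dotProduct_vecMulVec_self_mulVec]

theorem dotProduct_Dmat_mulVec_mono {M N : Matrix (Fin 3) (Fin 3) ℝ} {m₀ n₀ : ℝ}
    (hMN : ∀ u, u ⬝ᵥ (M *ᵥ u) ≤ u ⬝ᵥ (N *ᵥ u)) (hmn : m₀ ≤ n₀) (q v : Fin 4 → ℝ) :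
    v ⬝ᵥ (Dmat M m₀ q *ᵥ v) ≤ v ⬝ᵥ (Dmat N n₀ q *ᵥ v) := by
  rw [dotProduct_Dmat_mulVec, dotProduct_Dmat_mulVec]
  gcongr
  exact hMN _

theorem Jmat_eq (q : Fin 4 → ℝ) :
    Jmat q = !![-q 1, -q 2, -q 3; q 0, -q 3, q 2; q 3, q 0, -q 1; -q 2, q 1, q 0] := by
  have hblock : q 0 • (1 : Matrix (Fin 3) (Fin 3) ℝ) + vecHat (fun k => q k.succ) =
      !![q 0, -q 3, q 2; q 3, q 0, -q 1; -q 2, q 1, q 0] := by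
    ext i j
    fin_cases i <;> fin_cases j <;> simp [vecHat]
  ext i j
  rw [Jmat, hblock]
  fin_cases i <;> fin_cases j <;> rfl

theorem Jmat_mul_transpose_add_vecMulVec (q : Fin 4 → ℝ) :
    Jmat q * (Jmat q)ᵀ + vecMulVec q q = (q ⬝ᵥ q) • (1 : Matrix (Fin 4) (Fin 4) ℝ) := by
  ext i j
  simp only [Jmat_eq, Matrix.add_apply, mul_apply, transpose_apply, vecMulVec_apply,
    Matrix.smul_apply, dotProduct, Fin.sum_univ_three, Fin.sum_univ_four]
  fin_cases i <;> fin_cases j <;> simp <;> ring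

theorem Dmat_smul_one (c : ℝ) (q : Fin 4 → ℝ) :
    Dmat (c • 1) c q = (c * (q ⬝ᵥ q)) • (1 : Matrix (Fin 4) (Fin 4) ℝ) := by
  rw [Dmat, Matrix.mul_smul, Matrix.mul_one, Matrix.smul_mul, ← smul_add,
    Jmat_mul_transpose_add_vecMulVec, smul_smul]

theorem dotProduct_Dmat_smul_one_mulVec (c : ℝ) (q v : Fin 4 → ℝ) :
    v ⬝ᵥ (Dmat (c • 1) c q *ᵥ v) = c * (q ⬝ᵥ q) * (v ⬝ᵥ v) := by
  rw [Dmat_smul_one, dotProduct_smul_one_mulVec]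

theorem stmt11_general (M : Matrix (Fin 3) (Fin 3) ℝ) (hM : Mᵀ = M) (a b m₀ : ℝ)
    (hMa : ∀ u : Fin 3 → ℝ, a * (u ⬝ᵥ u) ≤ u ⬝ᵥ (M *ᵥ u))
    (hMb : ∀ u : Fin 3 → ℝ, u ⬝ᵥ (M *ᵥ u) ≤ b * (u ⬝ᵥ u))
    (ham₀ : a ≤ m₀) (hm₀b : m₀ ≤ b) (q : Fin 4 → ℝ) :
    (Dmat M m₀ q)ᵀ = Dmat M m₀ q ∧
    (∀ v : Fin 4 → ℝ,
      a * (q ⬝ᵥ q) * (v ⬝ᵥ v) ≤ v ⬝ᵥ (Dmat M m₀ q *ᵥ v) ∧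
      v ⬝ᵥ (Dmat M m₀ q *ᵥ v) ≤ b * (q ⬝ᵥ q) * (v ⬝ᵥ v)) := by
  simp only [← dotProduct_smul_one_mulVec] at hMa hMb
  simp only [← dotProduct_Dmat_smul_one_mulVec]
  exact ⟨isSymm_Dmat hM m₀ q, fun v =>
    ⟨dotProduct_Dmat_mulVec_mono hMa ham₀ q v, dotProduct_Dmat_mulVec_mono hMb hm₀b q v⟩⟩

/-- D(q) is symmetric and a‖v‖² ≤ vᵀD(q)v ≤ b‖v‖² whenever M is symmetric,
a‖u‖² ≤ uᵀMu ≤ b‖u‖² for all u, 0 < a, a ≤ m₀ ≤ b, and ‖q‖ = 1. -/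
theorem stmt11 (M : Matrix (Fin 3) (Fin 3) ℝ) (hM : Mᵀ = M)
    (a b m₀ : ℝ) (ha : 0 < a)
    (hMa : ∀ u : Fin 3 → ℝ, a * (u ⬝ᵥ u) ≤ u ⬝ᵥ (M *ᵥ u))
    (hMb : ∀ u : Fin 3 → ℝ, u ⬝ᵥ (M *ᵥ u) ≤ b * (u ⬝ᵥ u))
    (ham₀ : a ≤ m₀) (hm₀b : m₀ ≤ b)
    (q : Fin 4 → ℝ) (hq : norm4 q = 1) :
    (Dmat M m₀ q)ᵀ = Dmat M m₀ q ∧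
    (∀ v : Fin 4 → ℝ,
      a * (v ⬝ᵥ v) ≤ v ⬝ᵥ (Dmat M m₀ q *ᵥ v) ∧
      v ⬝ᵥ (Dmat M m₀ q *ᵥ v) ≤ b * (v ⬝ᵥ v)) := by
  have hqq : q ⬝ᵥ q = 1 := Real.sqrt_eq_one.mp hq
  simpa only [hqq, mul_one] using stmt11_general M hM a b m₀ hMa hMb ham₀ hm₀b q
end
end

section
/- Let M be a 3×3 real symmetric matrix and m₀ ∈ ℝ. Let q ∈ ℝ⁴ with ‖q‖ = 1 and q̇ ∈ ℝ⁴ with qᵀq̇ = 0, and set ω = 2Jᵀ(q)q̇. Define Ḋ = J(q̇)MJᵀ(q) + J(q)MJᵀ(q̇) + m₀(q̇qᵀ + qq̇ᵀ) and C(q,q̇) = −J(q)(Mω)^∧Jᵀ(q) − D(q)Q(q̇)Qᵀ(q). Then the matrix Ḋ − 2C(q,q̇) is annihilated by every quadratic form: xᵀ(Ḋ − 2C(q,q̇))x = 0 for all x ∈ ℝ⁴. -/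
/-!
With `N = diag(m₀, M)` one has `D(q) = Q(q)NQᵀ(q)` and `Ḋ = Q(q̇)NQᵀ(q) + Q(q)NQᵀ(q̇)`. The matrix
`Q(x)` is left multiplication by the quaternion `x`, so `Qᵀ(q)Q(q) = ‖q‖²I` and
`Q(q̇)Qᵀ(q) + Q(q)Qᵀ(q̇) = 2(qᵀq̇)I`. For a unit `q` orthogonal to `q̇` these give
`Qᵀ(q)Q(q̇)Qᵀ(q) = -Qᵀ(q̇)`, hence `D(q)Q(q̇)Qᵀ(q) = -Q(q)NQᵀ(q̇)` and
`Ḋ - 2C = Q(q̇)NQᵀ(q) - Q(q)NQᵀ(q̇) + 2J(q)(Mω)^∧Jᵀ(q)`.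
Since `N` is symmetric and `(Mω)^∧` is skew-symmetric, so is `Ḋ - 2C`, and its quadratic form
vanishes.
-/

open Matrix

noncomputable section

/-- Coriolis-type matrix C(q,q̇) = −J(q)(Mω)^∧Jᵀ(q) − D(q)Q(q̇)Qᵀ(q), ω = 2Jᵀ(q)q̇. -/
def Cmat (M : Matrix (Fin 3) (Fin 3) ℝ) (m₀ : ℝ) (q qd : Fin 4 → ℝ) :
    Matrix (Fin 4) (Fin 4) ℝ :=
  -(Jmat q * vecHat (M *ᵥ ((2 : ℝ) • ((Jmat q)ᵀ *ᵥ qd))) * (Jmat q)ᵀ)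
    - Dmat M m₀ q * Qmat qd * (Qmat q)ᵀ

/-- The block-diagonal matrix `diag(a, A)`, indexed by `Fin (n + 1)` with `a` in position `0`. It
merges the inertia parameters `m₀` and `M` so that `D(q) = Q(q) diag(m₀, M) Qᵀ(q)`. -/
def consDiag {R : Type*} [Zero R] {n : ℕ} (a : R) (A : Matrix (Fin n) (Fin n) R) :
    Matrix (Fin (n + 1)) (Fin (n + 1)) R :=
  Matrix.of (Fin.cons (Fin.cons a 0) fun i => Fin.cons 0 (A i))

theorem consDiag_transpose {R : Type*} [Zero R] {n : ℕ} (a : R) (A : Matrix (Fin n) (Fin n) R) :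
    (consDiag a A)ᵀ = consDiag a Aᵀ := by
  ext i j
  cases i using Fin.cases <;> cases j using Fin.cases <;> simp [consDiag]

theorem dotProduct_mulVec_self_eq_zero_of_transpose_eq_neg {R n : Type*} [CommRing R]
    [IsAddTorsionFree R] [Fintype n] {A : Matrix n n R} (hA : Aᵀ = -A) (x : n → R) :
    x ⬝ᵥ (A *ᵥ x) = 0 := by
  suffices x ⬝ᵥ (A *ᵥ x) = -(x ⬝ᵥ (A *ᵥ x)) from self_eq_neg.mp this
  calc
    x ⬝ᵥ (A *ᵥ x) = x ⬝ᵥ (Aᵀ *ᵥ x) := (dotProduct_transpose_mulVec A x x).symm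
    _ = -(x ⬝ᵥ (A *ᵥ x)) := by rw [hA, neg_mulVec, dotProduct_neg]

theorem vecHat_transpose (v : Fin 3 → ℝ) : (vecHat v)ᵀ = -vecHat v := by
  ext i j
  fin_cases i <;> fin_cases j <;> simp [vecHat]

theorem Qmat_eq (x : Fin 4 → ℝ) :
    Qmat x = !![x 0, -x 1, -x 2, -x 3; x 1, x 0, -x 3, x 2; x 2, x 3, x 0, -x 1;
      x 3, -x 2, x 1, x 0] := by
  ext i j
  fin_cases i <;> fin_cases j <;>
    simp [Qmat, Jmat, vecHat, Fin.pred, Fin.subNat, Matrix.one_apply]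

theorem Qmat_transpose_mul_self (q : Fin 4 → ℝ) : (Qmat q)ᵀ * Qmat q = (q ⬝ᵥ q) • 1 := by
  rw [Qmat_eq]
  ext i j
  simp only [Matrix.mul_apply, transpose_apply, dotProduct, Fin.sum_univ_four]
  fin_cases i <;> fin_cases j <;>
    simp only [Fin.zero_eta, Fin.mk_one, Fin.reduceFinMk, of_apply, cons_val', cons_val,
      cons_val_fin_one, Matrix.smul_apply, one_apply, Fin.reduceEq, reduceIte, smul_eq_mul] <;>
    ring

theorem Qmat_mul_transpose_add_swap (p q : Fin 4 → ℝ) :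
    Qmat p * (Qmat q)ᵀ + Qmat q * (Qmat p)ᵀ = (2 * (q ⬝ᵥ p)) • 1 := by
  rw [Qmat_eq, Qmat_eq]
  ext i j
  simp only [Matrix.add_apply, Matrix.mul_apply, transpose_apply, dotProduct, Fin.sum_univ_four]
  fin_cases i <;> fin_cases j <;>
    simp only [Fin.zero_eta, Fin.mk_one, Fin.reduceFinMk, of_apply, cons_val', cons_val,
      cons_val_fin_one, Matrix.smul_apply, one_apply, Fin.reduceEq, reduceIte, smul_eq_mul] <;>
    ring

theorem Qmat_transpose_mul_Qmat_mul_transpose (p q : Fin 4 → ℝ) :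
    (Qmat q)ᵀ * (Qmat p * (Qmat q)ᵀ) = (2 * (q ⬝ᵥ p)) • (Qmat q)ᵀ - (q ⬝ᵥ q) • (Qmat p)ᵀ := by
  rw [eq_sub_of_add_eq (Qmat_mul_transpose_add_swap p q), Matrix.mul_sub,
    ← Matrix.mul_assoc, Qmat_transpose_mul_self, Matrix.mul_smul, Matrix.mul_one,
    Matrix.smul_mul, Matrix.one_mul]

theorem Qmat_mul_consDiag_mul_transpose (M : Matrix (Fin 3) (Fin 3) ℝ) (m₀ : ℝ)
    (p q : Fin 4 → ℝ) :
    Qmat p * consDiag m₀ M * (Qmat q)ᵀ = Jmat p * M * (Jmat q)ᵀ + m₀ • vecMulVec p q := by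
  ext i j
  simp only [Qmat, consDiag, Matrix.mul_apply, Matrix.add_apply, Matrix.smul_apply, vecMulVec_apply,
    transpose_apply, of_apply, Fin.sum_univ_succ (n := 3), Fin.succ_ne_zero, Fin.pred_succ,
    Fin.cons_zero, Fin.cons_succ, Pi.zero_apply, ↓reduceDIte, mul_zero, Finset.sum_const_zero,
    add_zero, zero_add, smul_eq_mul]
  ring

theorem Cmat_eq_of_unit_of_orthogonal (M : Matrix (Fin 3) (Fin 3) ℝ) (m₀ : ℝ)
    {q qd : Fin 4 → ℝ} (hq : q ⬝ᵥ q = 1) (hqd : q ⬝ᵥ qd = 0) :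
    Cmat M m₀ q qd = Qmat q * consDiag m₀ M * (Qmat qd)ᵀ
      - Jmat q * vecHat (M *ᵥ ((2 : ℝ) • ((Jmat q)ᵀ *ᵥ qd))) * (Jmat q)ᵀ := by
  have hQ : (Qmat q)ᵀ * (Qmat qd * (Qmat q)ᵀ) = -(Qmat qd)ᵀ := by
    simp [Qmat_transpose_mul_Qmat_mul_transpose, hq, hqd]
  have hD : Dmat M m₀ q * Qmat qd * (Qmat q)ᵀ = -(Qmat q * consDiag m₀ M * (Qmat qd)ᵀ) := by
    rw [Dmat, ← Qmat_mul_consDiag_mul_transpose, Matrix.mul_assoc, Matrix.mul_assoc, hQ,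
      Matrix.mul_neg]
  rw [Cmat, hD]
  abel

/-- Skew-symmetry property: xᵀ(Ḋ − 2C(q,q̇))x = 0 for all x ∈ ℝ⁴, where
Ḋ = J(q̇)MJᵀ(q) + J(q)MJᵀ(q̇) + m₀(q̇qᵀ + qq̇ᵀ). -/
theorem stmt12 (M : Matrix (Fin 3) (Fin 3) ℝ) (hM : Mᵀ = M) (m₀ : ℝ)
    (q qd : Fin 4 → ℝ) (hq : norm4 q = 1) (hqd : q ⬝ᵥ qd = 0) :
    ∀ x : Fin 4 → ℝ,
      x ⬝ᵥ (((Jmat qd * M * (Jmat q)ᵀ + Jmat q * M * (Jmat qd)ᵀ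
          + m₀ • (vecMulVec qd q + vecMulVec q qd))
        - (2 : ℝ) • Cmat M m₀ q qd) *ᵥ x) = 0 := by
  intro x
  have hqq : q ⬝ᵥ q = 1 := Real.sqrt_eq_one.mp hq
  have hDdot : Jmat qd * M * (Jmat q)ᵀ + Jmat q * M * (Jmat qd)ᵀ
        + m₀ • (vecMulVec qd q + vecMulVec q qd)
      = Qmat qd * consDiag m₀ M * (Qmat q)ᵀ + Qmat q * consDiag m₀ M * (Qmat qd)ᵀ := by
    simp only [Qmat_mul_consDiag_mul_transpose]
    module
  apply dotProduct_mulVec_self_eq_zero_of_transpose_eq_neg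
  rw [hDdot, Cmat_eq_of_unit_of_orthogonal M m₀ hqq hqd]
  simp only [transpose_add, transpose_sub, transpose_smul, transpose_mul, transpose_transpose,
    consDiag_transpose, hM, vecHat_transpose, Matrix.mul_neg, Matrix.neg_mul, Matrix.mul_assoc]
  module
end
end

section
/- Let e = (1̄, 0) ∈ ℝ⁴ × ℝ⁴. For every g = (q, p) with q ∈ ℝ⁴, ‖q‖ = 1, and qᵀp = 0, one has g · e = g and e · g = g, where · is the binary operation on TS³ defined below. -/
/-!
Read `ℝ⁴` as the quaternions: then `Q(x) y` is the product `x y`, `W(y) x` is also `x y`, and `1̄`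
is the unit. With the term `λ (q₀ q - 1̄)` added to `p`, the operation on pairs becomes
`(q₁, p₁) (q₂, p₂) = (q₁ q₂, q₁ p₂ + p₁ q₂)`, the product of the dual quaternions `qᵢ + pᵢ ε`.
The added term vanishes at `q = 1̄`, so `e` corresponds to the unit of the dual quaternions, and
since the correspondence is injective, the unit laws carry over.
-/

open Matrix

noncomputable section

/-- The binary operation on TS³ from Eq. (12) of the paper (with parameter λ). -/
def gmul (lam : ℝ) (g₁ g₂ : (Fin 4 → ℝ) × (Fin 4 → ℝ)) : (Fin 4 → ℝ) × (Fin 4 → ℝ) :=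
  (Qmat g₁.1 *ᵥ g₂.1,
    Qmat g₁.1 *ᵥ g₂.2 + Wmat g₂.1 *ᵥ g₁.2
      + lam • (Qmat g₁.1 *ᵥ (g₂.1 0 • g₂.1 - one4))
      + lam • (Wmat g₂.1 *ᵥ (g₁.1 0 • g₁.1 - one4))
      - lam • ((Qmat g₁.1 *ᵥ g₂.1) 0 • (Qmat g₁.1 *ᵥ g₂.1) - one4))

open scoped Quaternion

/-- The quaternion `x₀ + x₁ i + x₂ j + x₃ k` of `x ∈ ℝ⁴`, as a linear equivalence; the matrices
`Q` and `W` are the multiplication operators of `ℍ` in these coordinates. -/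
def toQuaternion : (Fin 4 → ℝ) ≃ₗ[ℝ] ℍ[ℝ] :=
  (QuaternionAlgebra.linearEquivTuple (-1 : ℝ) 0 (-1)).symm

@[simp] theorem re_toQuaternion (x : Fin 4 → ℝ) : (toQuaternion x).re = x 0 := rfl

@[simp] theorem imI_toQuaternion (x : Fin 4 → ℝ) : (toQuaternion x).imI = x 1 := rfl

@[simp] theorem imJ_toQuaternion (x : Fin 4 → ℝ) : (toQuaternion x).imJ = x 2 := rfl

@[simp] theorem imK_toQuaternion (x : Fin 4 → ℝ) : (toQuaternion x).imK = x 3 := rfl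

theorem toQuaternion_one4 : toQuaternion one4 = 1 := by
  ext <;> simp [one4]

theorem toQuaternion_Qmat_mulVec (x y : Fin 4 → ℝ) :
    toQuaternion (Qmat x *ᵥ y) = toQuaternion x * toQuaternion y := by
  ext <;>
    simp [Qmat, Jmat, vecHat, mulVec, dotProduct, Fin.sum_univ_four, Fin.pred, Fin.subNat] <;>
    ring

theorem toQuaternion_Wmat_mulVec (x y : Fin 4 → ℝ) :
    toQuaternion (Wmat x *ᵥ y) = toQuaternion y * toQuaternion x := by
  ext <;>
    simp [Wmat, Lmat, vecHat, mulVec, dotProduct, Fin.sum_univ_four, Fin.pred, Fin.subNat] <;>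
    ring

/-- The correction `q₀ q - 1̄` by which `λ` enters the fibre component of `gmul`. -/
def fiberShift (q : Fin 4 → ℝ) : Fin 4 → ℝ := q 0 • q - one4

theorem fiberShift_one4 : fiberShift one4 = 0 := by
  simp [fiberShift, one4]

/-- The dual quaternion `q + (p + λ (q₀ q - 1̄)) ε` of a pair `(q, p)`; in these coordinates `gmul`
is multiplication. It is defined on all of `ℝ⁴ × ℝ⁴`, not only on `TS³`. -/
def toDualQuaternion (lam : ℝ) (g : (Fin 4 → ℝ) × (Fin 4 → ℝ)) : DualNumber ℍ[ℝ] :=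
  .inl (toQuaternion g.1) + .inr (toQuaternion (g.2 + lam • fiberShift g.1))

@[simp] theorem fst_toDualQuaternion (lam : ℝ) (g : (Fin 4 → ℝ) × (Fin 4 → ℝ)) :
    (toDualQuaternion lam g).fst = toQuaternion g.1 := by
  simp [toDualQuaternion]

@[simp] theorem snd_toDualQuaternion (lam : ℝ) (g : (Fin 4 → ℝ) × (Fin 4 → ℝ)) :
    (toDualQuaternion lam g).snd = toQuaternion (g.2 + lam • fiberShift g.1) := by
  simp [toDualQuaternion]

theorem toDualQuaternion_injective (lam : ℝ) : Function.Injective (toDualQuaternion lam) := by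
  rintro ⟨q, p⟩ ⟨q', p'⟩ h
  obtain rfl : q = q' := by simpa using congrArg TrivSqZeroExt.fst h
  obtain rfl : p = p' := by simpa using congrArg TrivSqZeroExt.snd h
  rfl

theorem toDualQuaternion_one4_zero (lam : ℝ) : toDualQuaternion lam (one4, 0) = 1 := by
  simp [toDualQuaternion, toQuaternion_one4, fiberShift_one4]

theorem gmul_snd_add_smul_fiberShift (lam : ℝ) (g h : (Fin 4 → ℝ) × (Fin 4 → ℝ)) :
    (gmul lam g h).2 + lam • fiberShift (gmul lam g h).1 =
      Qmat g.1 *ᵥ (h.2 + lam • fiberShift h.1) + Wmat h.1 *ᵥ (g.2 + lam • fiberShift g.1) := by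
  simp only [gmul, fiberShift, mulVec_add, mulVec_smul]
  abel

theorem toDualQuaternion_gmul (lam : ℝ) (g h : (Fin 4 → ℝ) × (Fin 4 → ℝ)) :
    toDualQuaternion lam (gmul lam g h) = toDualQuaternion lam g * toDualQuaternion lam h := by
  ext1
  · simp [gmul, toQuaternion_Qmat_mulVec]
  · rw [DualNumber.snd_mul]
    simp only [fst_toDualQuaternion, snd_toDualQuaternion, gmul_snd_add_smul_fiberShift, map_add,
      toQuaternion_Qmat_mulVec, toQuaternion_Wmat_mulVec]

theorem stmt13_general (lam : ℝ) (g : (Fin 4 → ℝ) × (Fin 4 → ℝ)) :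
    gmul lam g (one4, 0) = g ∧ gmul lam (one4, 0) g = g := by
  constructor <;> apply toDualQuaternion_injective lam
  · rw [toDualQuaternion_gmul, toDualQuaternion_one4_zero, mul_one]
  · rw [toDualQuaternion_gmul, toDualQuaternion_one4_zero, one_mul]

/-- e = (1̄, 0) is a two-sided identity for the binary operation on TS³. -/
theorem stmt13 (lam : ℝ) (hlam : 0 < lam) (q p : Fin 4 → ℝ)
    (hq : norm4 q = 1) (hp : q ⬝ᵥ p = 0) :
    gmul lam (q, p) (one4, 0) = (q, p) ∧ gmul lam (one4, 0) (q, p) = (q, p) :=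
  stmt13_general lam (q, p)
end
end

section
/- Let λ > 0 and let q : [0,∞) → ℝ⁴ be differentiable with ‖q(t)‖ = 1 for all t ≥ 0, satisfying the sliding-mode dynamics q̇(t) = −λ(q₀(t)q(t) − 1̄), where q₀(t) is the first component of q(t). If q₀(0) > −1, then q(t) → 1̄ as t → ∞. Moreover, the function V(t) = 1 − q₀(t) = ½‖q(t) − 1̄‖² satisfies V̇(t) = −λ(1 + q₀(t))V(t) for all t ≥ 0. -/
/-!
Let `s = ℓ q` be the component of `q` along `e`, that is `q₀` when `e = 1̄`. It satisfies the
Riccati equation `s' = λ (1 - s²)`, whose right-hand side is positive at every level in `(-1, 1)`,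
so `s` stays above some `m > -1`. Stereographic projection from `-e` then linearizes the flow:
`y = (q - s e) / (1 + s)` satisfies `y' = -λ y`, and `z = (1 - s) / (1 + s)` satisfies
`z' = -2 λ z`. Both decay exponentially, which forces `s → 1` and then `q = (1 + s) y + s e → e`.
-/

open Matrix

noncomputable section

open Filter Set Topology

section LinearEquation

variable {E : Type*} [NormedAddCommGroup E] [NormedSpace ℝ E] {f : ℝ → E} {k a : ℝ}

lemma eq_exp_smul_of_hasDerivWithinAt_smul
    (hf : ∀ t ≥ a, HasDerivWithinAt f (k • f t) (Ici a) t) {t : ℝ} (ht : a ≤ t) :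
    f t = Real.exp (k * (t - a)) • f a := by
  have hderiv : ∀ r ≥ a,
      HasDerivWithinAt (fun r => Real.exp (-(k * (r - a))) • f r) 0 (Ici a) r := by
    intro r hr
    have hexp : HasDerivWithinAt (fun r => Real.exp (-(k * (r - a))))
        (Real.exp (-(k * (r - a))) * -(k * 1)) (Ici a) r :=
      (((hasDerivWithinAt_id r _).sub_const a).const_mul k).fun_neg.exp
    refine (hexp.smul (hf r hr)).congr_deriv ?_
    module
  have hconst : Real.exp (-(k * (t - a))) • f t = f a := by
    simpa using constant_of_has_deriv_right_zero
      (fun r hr => (hderiv r hr.1).continuousWithinAt.mono Icc_subset_Ici_self)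
      (fun r hr => (hderiv r hr.1).mono (Ici_subset_Ici.2 hr.1)) t (right_mem_Icc.2 ht)
  rw [← hconst, smul_smul, ← Real.exp_add, add_neg_cancel, Real.exp_zero, one_smul]

lemma tendsto_zero_of_hasDerivWithinAt_smul (hk : k < 0)
    (hf : ∀ t ≥ a, HasDerivWithinAt f (k • f t) (Ici a) t) : Tendsto f atTop (𝓝 0) := by
  have hexp : Tendsto (fun t => Real.exp (k * (t - a))) atTop (𝓝 0) :=
    Real.tendsto_exp_comp_nhds_zero.2
      ((tendsto_atTop_add_const_right atTop (-a) tendsto_id).const_mul_atTop_of_neg hk)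
  have hlim : Tendsto (fun t => Real.exp (k * (t - a)) • f a) atTop (𝓝 0) := by
    simpa only [zero_smul] using hexp.smul_const (f a)
  refine hlim.congr' ?_
  filter_upwards [eventually_ge_atTop a] with t ht
  exact (eq_exp_smul_of_hasDerivWithinAt_smul hf ht).symm

end LinearEquation

section Riccati

variable {s : ℝ → ℝ} {lam a t : ℝ}

lemma neg_one_lt_of_riccati (hlam : 0 < lam)
    (hs : ∀ t ≥ a, HasDerivWithinAt s (lam * (1 - s t ^ 2)) (Ici a) t) (ha : -1 < s a)
    (ht : a ≤ t) : -1 < s t := by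
  obtain ⟨m, hm, hm_lt⟩ : ∃ m, -1 < m ∧ m < min (s a) 1 :=
    exists_between (lt_min ha (by norm_num))
  obtain ⟨hm_init, hm_one⟩ := lt_min_iff.1 hm_lt
  have hbarrier : m ≤ s t := by
    refine image_le_of_deriv_right_lt_deriv_boundary' continuousOn_const
      (fun r _ => hasDerivWithinAt_const r _ m) hm_init.le
      (fun r hr => (hs r hr.1).continuousWithinAt.mono Icc_subset_Ici_self)
      (fun r hr => (hs r hr.1).mono (Ici_subset_Ici.2 hr.1))
      (fun r _ hr => ?_) (right_mem_Icc.2 ht)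
    rw [← hr]
    exact mul_pos hlam (by nlinarith)
  exact hm.trans_le hbarrier

lemma hasDerivWithinAt_cayley_of_riccati {S : Set ℝ}
    (hs : HasDerivWithinAt s (lam * (1 - s t ^ 2)) S t) (hpos : -1 < s t) :
    HasDerivWithinAt (fun r => (1 - s r) / (1 + s r))
      (-(2 * lam) • ((1 - s t) / (1 + s t))) S t := by
  have hne : 1 + s t ≠ 0 := by linarith
  refine ((hs.const_sub 1).fun_div (hs.const_add 1) hne).congr_deriv ?_
  rw [smul_eq_mul]
  field_simp
  ring

lemma tendsto_one_of_riccati (hlam : 0 < lam)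
    (hs : ∀ t ≥ a, HasDerivWithinAt s (lam * (1 - s t ^ 2)) (Ici a) t) (ha : -1 < s a) :
    Tendsto s atTop (𝓝 1) := by
  have hpos : ∀ t ≥ a, -1 < s t := fun t ht => neg_one_lt_of_riccati hlam hs ha ht
  have hz : Tendsto (fun t => (1 - s t) / (1 + s t)) atTop (𝓝 0) :=
    tendsto_zero_of_hasDerivWithinAt_smul (by linarith)
      fun t ht => hasDerivWithinAt_cayley_of_riccati (hs t ht) (hpos t ht)
  have hlim : Tendsto (fun t => 2 / (1 + (1 - s t) / (1 + s t)) - 1) atTop (𝓝 1) := by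
    have hcont : Tendsto (fun z : ℝ => 2 / (1 + z) - 1) (𝓝 0) (𝓝 1) :=
      (ContinuousAt.tendsto (by fun_prop (disch := norm_num))).trans_eq (by norm_num)
    exact hcont.comp hz
  refine hlim.congr' ?_
  filter_upwards [eventually_ge_atTop a] with t ht
  have hne : 1 + s t ≠ 0 := by linarith [hpos t ht]
  field_simp
  ring

end Riccati

section SlidingFlow

variable {E : Type*} [NormedAddCommGroup E] [NormedSpace ℝ E] {ℓ : E →L[ℝ] ℝ} {e : E}
  {q : ℝ → E} {lam a : ℝ}

/-- Stereographic projection of `x` from `-e` onto the hyperplane `ker ℓ`, for `ℓ e = 1`; it is the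
coordinate in which the sliding flow is linear. For `ℓ x = -1` it takes the junk value `0`. -/
def stereoCoord (ℓ : E →L[ℝ] ℝ) (e x : E) : E := (1 + ℓ x)⁻¹ • (x - ℓ x • e)

lemma one_add_smul_stereoCoord_add {x : E} (hx : 1 + ℓ x ≠ 0) :
    (1 + ℓ x) • stereoCoord ℓ e x + ℓ x • e = x := by
  rw [stereoCoord, smul_inv_smul₀ hx, sub_add_cancel]

section Pointwise

variable {S : Set ℝ} {t : ℝ}

lemma hasDerivWithinAt_apply_of_sliding (he : ℓ e = 1)
    (hq : HasDerivWithinAt q (-lam • (ℓ (q t) • q t - e)) S t) :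
    HasDerivWithinAt (fun r => ℓ (q r)) (lam * (1 - ℓ (q t) ^ 2)) S t := by
  refine (ℓ.hasFDerivAt.comp_hasDerivWithinAt t hq).congr_deriv ?_
  simp only [map_smul, map_sub, smul_eq_mul, he]
  ring

lemma hasDerivWithinAt_one_sub_apply_of_sliding (he : ℓ e = 1)
    (hq : HasDerivWithinAt q (-lam • (ℓ (q t) • q t - e)) S t) :
    HasDerivWithinAt (fun r => 1 - ℓ (q r)) (-(lam * (1 + ℓ (q t))) * (1 - ℓ (q t))) S t :=
  ((hasDerivWithinAt_apply_of_sliding he hq).const_sub 1).congr_deriv (by ring)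

lemma hasDerivWithinAt_stereoCoord_of_sliding (he : ℓ e = 1)
    (hq : HasDerivWithinAt q (-lam • (ℓ (q t) • q t - e)) S t) (hne : 1 + ℓ (q t) ≠ 0) :
    HasDerivWithinAt (fun r => stereoCoord ℓ e (q r)) (-lam • stereoCoord ℓ e (q t)) S t := by
  have hs := hasDerivWithinAt_apply_of_sliding he hq
  have hproj : HasDerivWithinAt (fun r => q r - ℓ (q r) • e)
      (-(lam * ℓ (q t)) • (q t - ℓ (q t) • e)) S t := by
    refine (hq.fun_sub (hs.smul_const e)).congr_deriv ?_
    module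
  have hinv : HasDerivWithinAt (fun r => (1 + ℓ (q r))⁻¹)
      (-(lam * (1 - ℓ (q t))) * (1 + ℓ (q t))⁻¹) S t := by
    refine ((hs.const_add 1).fun_inv hne).congr_deriv ?_
    field_simp
    ring
  refine (hinv.fun_smul hproj).congr_deriv ?_
  rw [stereoCoord]
  module

end Pointwise

lemma tendsto_of_sliding (he : ℓ e = 1) (hlam : 0 < lam)
    (hq : ∀ t ≥ a, HasDerivWithinAt q (-lam • (ℓ (q t) • q t - e)) (Ici a) t)
    (ha : -1 < ℓ (q a)) : Tendsto q atTop (𝓝 e) := by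
  have hs : ∀ t ≥ a, HasDerivWithinAt (fun r => ℓ (q r)) (lam * (1 - ℓ (q t) ^ 2)) (Ici a) t :=
    fun t ht => hasDerivWithinAt_apply_of_sliding he (hq t ht)
  have hne : ∀ t ≥ a, 1 + ℓ (q t) ≠ 0 := fun t ht => by
    linarith [neg_one_lt_of_riccati hlam hs ha ht]
  have hs_lim : Tendsto (fun t => ℓ (q t)) atTop (𝓝 1) := tendsto_one_of_riccati hlam hs ha
  have hy_lim : Tendsto (fun t => stereoCoord ℓ e (q t)) atTop (𝓝 0) :=
    tendsto_zero_of_hasDerivWithinAt_smul (neg_lt_zero.2 hlam)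
      fun t ht => hasDerivWithinAt_stereoCoord_of_sliding he (hq t ht) (hne t ht)
  have hlim : Tendsto (fun t => (1 + ℓ (q t)) • stereoCoord ℓ e (q t) + ℓ (q t) • e)
      atTop (𝓝 e) := by
    simpa only [smul_zero, one_smul, zero_add] using
      ((hs_lim.const_add 1).smul hy_lim).add (hs_lim.smul_const e)
  refine hlim.congr' ?_
  filter_upwards [eventually_ge_atTop a] with t ht
  exact one_add_smul_stereoCoord_add (hne t ht)

end SlidingFlow

lemma norm4_sq (x : Fin 4 → ℝ) : norm4 x ^ 2 = x ⬝ᵥ x :=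
  Real.sq_sqrt (by simpa using dotProduct_star_self_nonneg x)

lemma norm4_sub_one4_sq (x : Fin 4 → ℝ) :
    norm4 (x - one4) ^ 2 = norm4 x ^ 2 - 2 * x 0 + 1 := by
  simp only [norm4_sq, dotProduct, Fin.sum_univ_four, Pi.sub_apply, one4, cons_val]
  ring

lemma one_sub_eq_half_norm4_sub_one4_sq {x : Fin 4 → ℝ} (hx : norm4 x = 1) :
    1 - x 0 = (1 / 2) * norm4 (x - one4) ^ 2 := by
  rw [norm4_sub_one4_sq, hx]
  ring

theorem stmt18_general {E : Type*} [NormedAddCommGroup E] [NormedSpace ℝ E] {ℓ : E →L[ℝ] ℝ} {e : E}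
    (he : ℓ e = 1) {lam : ℝ} (hlam : 0 < lam) {q : ℝ → E}
    (hderiv : ∀ t ≥ (0 : ℝ), HasDerivWithinAt q (-lam • (ℓ (q t) • q t - e)) (Ici 0) t)
    (hinit : -1 < ℓ (q 0)) :
    Tendsto q atTop (𝓝 e) ∧
    ∀ t ≥ (0 : ℝ), HasDerivWithinAt (fun r => 1 - ℓ (q r))
      (-(lam * (1 + ℓ (q t))) * (1 - ℓ (q t))) (Ici 0) t :=
  ⟨tendsto_of_sliding he hlam hderiv hinit,
    fun t ht => hasDerivWithinAt_one_sub_apply_of_sliding he (hderiv t ht)⟩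

/-- Sliding property: under q̇ = −λ(q₀q − 1̄) on S³ with q₀(0) > −1, the state
q(t) converges to 1̄; moreover V = 1 − q₀ = ½‖q − 1̄‖² satisfies
V̇ = −λ(1 + q₀)V. -/
theorem stmt18 (lam : ℝ) (hlam : 0 < lam) (q : ℝ → Fin 4 → ℝ)
    (hnorm : ∀ t ≥ (0 : ℝ), norm4 (q t) = 1)
    (hderiv : ∀ t ≥ (0 : ℝ),
      HasDerivWithinAt q (-lam • (q t 0 • q t - one4)) (Set.Ici 0) t)
    (hinit : q 0 0 > -1) :
    Filter.Tendsto q Filter.atTop (nhds one4) ∧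
    (∀ t ≥ (0 : ℝ), 1 - q t 0 = (1 / 2) * norm4 (q t - one4) ^ 2) ∧
    (∀ t ≥ (0 : ℝ), HasDerivWithinAt (fun r => 1 - q r 0)
      (-(lam * (1 + q t 0)) * (1 - q t 0)) (Set.Ici 0) t) := by
  obtain ⟨hlim, hV⟩ := stmt18_general
    (ℓ := ContinuousLinearMap.proj (R := ℝ) (φ := fun _ : Fin 4 => ℝ) 0) rfl hlam hderiv hinit
  exact ⟨hlim, fun t ht => one_sub_eq_half_norm4_sub_one4_sq (hnorm t ht), hV⟩
end
end
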